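/- Let G be a noncyclic finite p-group of nilpotence class l ≥ 1 and order p^n. Then the number of conjugacy classes of maximal cyclic subgroups of G is at least (p-1)(n/l - 2) + p + 1. -/

import Mathlib

def IsMaximalCyclic {G : Type*} [Group G] (H : Subgroup G) : Prop :=
  IsCyclic H ∧ ∀ K : Subgroup G, IsCyclic K → H ≤ K → H = K

def conjClass {G : Type*} [Group G] (H : Subgroup G) : Set (Subgroup G) :=
  {K | ∃ g : G, K = H.map (MulAut.conj g).toMonoidHom}

/-- The number of conjugacy classes of maximal cyclic subgroups of `G`. -/
noncomputable def eta (G : Type*) [Group G] : ℕ :=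
  (conjClass '' {H : Subgroup G | IsMaximalCyclic H}).ncard

/-!
Passing to a quotient of `G`, or to a central subgroup of `G`, does not increase the number of
classes of maximal cyclic subgroups, so every factor `Z` of the lower central series contributes a
lower bound: `eta G` is at least the number of maximal cyclic subgroups of `Z`.

Suppose `Z` is abelian, not cyclic and of order `p ^ m`. Divide it by a subgroup `N` of order `p`
and choose a maximal cyclic subgroup `⟨gN⟩` of `Z / N` containing the image of an element of order
`p` outside `N`. No cyclic subgroup of `Z` lying over `⟨gN⟩` meets `N`, so the `p` subgroups `⟨gz⟩`
with `z ∈ N` are distinct and maximal cyclic. Hence `Z` has at least `p - 1` more maximal cyclic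
subgroups than `Z / N`; for `m = 2` it has the `p` above and one more that contains `N`. If `m > 2`,
then `N` can be chosen with `Z / N` not cyclic, so by induction `Z` has at least
`(p - 1) * (m - 1) + 2` maximal cyclic subgroups.

Among the `l` factors of the lower central series one has order `p ^ m` with `m ≥ n / l`. The
exponents of these factors form a divisibility chain, so if that factor is cyclic, its order divides
the order of the abelianization, which is not cyclic because `G` is not; the bound for the
abelianization then suffices.
-/

open Subgroup
open scoped commutatorElement

section Frattini

variable {G : Type*} [Group G]

lemma isSimpleGroup_quotient_of_isCoatom {M : Subgroup G} [M.Normal] (hM : IsCoatom M) :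
    IsSimpleGroup (G ⧸ M) where
  exists_pair_ne :=
    have := QuotientGroup.nontrivial_iff.2 hM.1
    exists_pair_ne _
  eq_bot_or_eq_top_of_normal H _ := by
    have hle : M ≤ H.comap (QuotientGroup.mk' M) := by
      simpa only [QuotientGroup.ker_mk'] using (QuotientGroup.mk' M).ker_le_comap H
    rw [← map_comap_eq_self_of_surjective (QuotientGroup.mk'_surjective M) H]
    rcases hM.le_iff.1 hle with h | h
    · exact .inr (by rw [h, map_top_of_surjective _ (QuotientGroup.mk'_surjective M)])
    · exact .inl (by rw [h, QuotientGroup.map_mk'_self])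

lemma commutator_le_frattini [Group.IsNilpotent G] : commutator G ≤ frattini G := by
  refine le_iInf₂ fun M hM => ?_
  have := NormalizerCondition.normal_of_coatom M Group.normalizerCondition_of_isNilpotent hM
  have := isSimpleGroup_quotient_of_isCoatom hM
  exact Normal.quotient_commutative_iff_commutator_le.1 inferInstance

lemma pow_mem_frattini_of_isPGroup [Finite G] {p : ℕ} [hp : Fact p.Prime] (hG : IsPGroup p G)
    (x : G) : x ^ p ∈ frattini G := by
  have := hG.isNilpotent
  refine zpowers_le.1 (le_iInf₂ fun M hM => zpowers_le.2 ?_)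
  have := NormalizerCondition.normal_of_coatom M Group.normalizerCondition_of_isNilpotent hM
  have := isSimpleGroup_quotient_of_isCoatom hM
  have hdvd : p ∣ Nat.card (G ⧸ M) :=
    (hG.to_quotient M).card_eq_or_dvd.resolve_left Finite.one_lt_card.ne'
  have hprime : (Nat.card (G ⧸ M)).Prime :=
    let := IsCyclic.commGroup (α := G ⧸ M)
    IsSimpleGroup.prime_card
  have hcard : p = Nat.card (G ⧸ M) := (Nat.prime_dvd_prime_iff_eq hp.out hprime).1 hdvd
  rw [← QuotientGroup.eq_one_iff, QuotientGroup.mk_pow, hcard, pow_card_eq_one']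

lemma isCyclic_of_isCyclic_quotient_of_le_frattini [IsCoatomic (Subgroup G)] {N : Subgroup G}
    [N.Normal] (hN : N ≤ frattini G) [IsCyclic (G ⧸ N)] : IsCyclic G := by
  obtain ⟨g, hg⟩ := IsCyclic.exists_generator (α := G ⧸ N)
  obtain ⟨g, rfl⟩ := QuotientGroup.mk_surjective g
  refine isCyclic_iff_exists_zpowers_eq_top.2 ⟨g, frattini_nongenerating (top_unique ?_)⟩
  intro x _
  obtain ⟨k, hk⟩ := mem_zpowers_iff.1 (hg x)
  rw [← QuotientGroup.mk_zpow, QuotientGroup.eq] at hk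
  rw [← mul_inv_cancel_left (g ^ k) x]
  exact mul_mem (mem_sup_left (zpow_mem_zpowers g k)) (mem_sup_right (hN hk))

end Frattini

section AbelianPGroup

variable {A : Type*} [CommGroup A] [Finite A] {p : ℕ} [hp : Fact p.Prime]

lemma isCyclic_of_card_ker_powMonoidHom_dvd (hA : IsPGroup p A)
    (h : Nat.card (powMonoidHom p : A →* A).ker ∣ p) : IsCyclic A := by
  have : IsCyclic (A ⧸ (powMonoidHom p : A →* A).range) :=
    isCyclic_of_card_dvd_prime (p := p) (by rwa [← index_eq_card, index_range])
  refine isCyclic_of_isCyclic_quotient_of_le_frattini (N := (powMonoidHom p).range) ?_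
  rintro _ ⟨x, rfl⟩
  exact pow_mem_frattini_of_isPGroup hA x

lemma exists_pow_eq_one_notMem_of_not_isCyclic (hA : IsPGroup p A) (hnc : ¬ IsCyclic A)
    {N : Subgroup A} (hN : Nat.card N = p) : ∃ x : A, x ^ p = 1 ∧ x ∉ N := by
  by_contra! h
  have hle : (powMonoidHom p : A →* A).ker ≤ N := h
  exact hnc (isCyclic_of_card_ker_powMonoidHom_dvd hA ((card_dvd_of_le hle).trans hN.dvd))

lemma exists_card_eq_prime_not_isCyclic_quotient {n : ℕ} (hn : 2 < n) (hA : Nat.card A = p ^ n)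
    (hnc : ¬ IsCyclic A) : ∃ N : Subgroup A, Nat.card N = p ∧ ¬ IsCyclic (A ⧸ N) := by
  have hPA : IsPGroup p A := .of_card hA
  rcases eq_or_ne (frattini A) ⊥ with hΦ | hΦ
  · obtain ⟨x, hx⟩ := exists_prime_orderOf_dvd_card' (G := A) p (hA ▸ dvd_pow_self p (by lia))
    refine ⟨zpowers x, by rw [Nat.card_zpowers, hx], fun _ => ?_⟩
    have hpow (a : A) : a ^ p = 1 := by
      simpa only [hΦ, mem_bot] using pow_mem_frattini_of_isPGroup hPA a
    have hexp : Monoid.exponent (A ⧸ zpowers x) ∣ p :=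
      (MonoidHom.exponent_dvd (QuotientGroup.mk'_surjective _)).trans
        (Monoid.exponent_dvd_of_forall_pow_eq_one hpow)
    have hcard := card_eq_card_quotient_mul_card_subgroup (zpowers x)
    rw [hA, Nat.card_zpowers, hx] at hcard
    have : p ^ n ∣ p ^ 2 := by
      rw [hcard, sq]
      exact mul_dvd_mul_right (IsCyclic.exponent_eq_card (α := A ⧸ zpowers x) ▸ hexp) p
    exact hn.not_ge ((Nat.pow_dvd_pow_iff_le_right hp.out.one_lt).1 this)
  · have hdvd : p ∣ Nat.card (frattini A) :=
      (hPA.to_subgroup _).card_eq_or_dvd.resolve_left (mt card_eq_one.1 hΦ)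
    obtain ⟨x, hx⟩ := exists_prime_orderOf_dvd_card' p hdvd
    refine ⟨zpowers (x : A), by rw [Nat.card_zpowers, orderOf_coe, hx], fun _ => hnc ?_⟩
    exact isCyclic_of_isCyclic_quotient_of_le_frattini (zpowers_le.2 x.2)

end AbelianPGroup

section MaximalCyclic

variable {G H : Type*} [Group G] [Group H]

/-- The set of maximal cyclic subgroups of `G`: `eta G` counts its image under `conjClass`, and for
abelian `G` this set itself is counted instead. -/
def maximalCyclics (G : Type*) [Group G] : Set (Subgroup G) :=
  {K | IsMaximalCyclic K}

lemma isCyclic_map (f : G →* H) (K : Subgroup G) [IsCyclic K] : IsCyclic (K.map f) :=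
  isCyclic_of_surjective (f.subgroupMap K) (f.subgroupMap_surjective K)

lemma exists_le_isMaximalCyclic [Finite G] (K : Subgroup G) [hK : IsCyclic K] :
    ∃ M, IsMaximalCyclic M ∧ K ≤ M := by
  obtain ⟨M, hKM, hM⟩ := (Set.toFinite {L : Subgroup G | IsCyclic L}).exists_le_maximal hK
  exact ⟨M, ⟨hM.prop, fun _ hL hML => hM.eq_of_le hL hML⟩, hKM⟩

lemma IsMaximalCyclic.exists_map_eq [Finite G] {f : G →* H} (hf : Function.Surjective f)
    {M : Subgroup H} (hM : IsMaximalCyclic M) : ∃ K, IsMaximalCyclic K ∧ K.map f = M := by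
  obtain ⟨y, rfl⟩ := M.isCyclic_iff_exists_zpowers_eq_top.1 hM.1
  obtain ⟨x, rfl⟩ := hf y
  obtain ⟨K, hK, hxK⟩ := exists_le_isMaximalCyclic (zpowers x)
  have := hK.1
  refine ⟨K, hK, (hM.2 _ (isCyclic_map f K) ?_).symm⟩
  simpa only [MonoidHom.map_zpowers] using map_mono (f := f) hxK

lemma ncard_maximalCyclics_add_ncard_fibre_le [Finite G] {f : G →* H}
    (hf : Function.Surjective f) (M : Subgroup H) :
    (maximalCyclics H).ncard + {K ∈ maximalCyclics G | K.map f = M}.ncard ≤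
      (maximalCyclics G).ncard + 1 := by
  set F := {K ∈ maximalCyclics G | K.map f = M}
  have hlift : maximalCyclics H \ {M} ⊆ Subgroup.map f '' (maximalCyclics G \ F) := by
    rintro L ⟨hL, hLM⟩
    obtain ⟨K, hK, rfl⟩ := hL.exists_map_eq hf
    exact ⟨K, ⟨hK, fun hKF => hLM hKF.2⟩, rfl⟩
  have hle := (Set.ncard_le_ncard hlift).trans Set.ncard_image_le
  have hsub : (maximalCyclics G \ F).ncard + F.ncard = (maximalCyclics G).ncard :=
    Set.ncard_sdiff_add_ncard_of_subset (Set.sep_subset _ _)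
  have hpred := Set.pred_ncard_le_ncard_sdiff_singleton (maximalCyclics H) M
  lia

lemma mem_of_pow_card_eq_one [Finite G] [IsCyclic G] {N : Subgroup G} {x : G}
    (hx : x ^ Nat.card N = 1) : x ∈ N := by
  let := IsCyclic.commGroup (α := G)
  have hle : N ≤ (powMonoidHom (Nat.card N) : G →* G).ker := fun y hy =>
    orderOf_dvd_iff_pow_eq_one.1 (N.orderOf_dvd_natCard hy)
  have hcard : Nat.card (powMonoidHom (Nat.card N) : G →* G).ker ≤ Nat.card N := by
    rw [IsCyclic.card_powMonoidHom_ker]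
    exact Nat.gcd_le_right _ Nat.card_pos
  rw [eq_of_le_of_card_ge hle hcard]
  exact hx

section Fibre

variable [Finite G] {N : Subgroup G} [N.Normal] {x : G} {M : Subgroup (G ⧸ N)}

lemma disjoint_of_mk_mem_map (hN : (Nat.card N).Prime) (hx : x ^ Nat.card N = 1) (hxN : x ∉ N)
    {K : Subgroup G} [IsCyclic K] (hxK : (x : G ⧸ N) ∈ K.map (QuotientGroup.mk' N)) :
    Disjoint K N := by
  have := Fact.mk hN
  rcases (K.subgroupOf N).eq_bot_or_eq_top_of_prime_card with h | h
  · exact subgroupOf_eq_bot.1 h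
  · have hNK : N ≤ K := subgroupOf_eq_top.1 h
    have hxK' : x ∈ K := by
      have : x ∈ (K.map (QuotientGroup.mk' N)).comap (QuotientGroup.mk' N) := hxK
      rwa [QuotientGroup.comap_map_mk', sup_eq_right.2 hNK] at this
    have hcard : Nat.card (N.subgroupOf K) = Nat.card N :=
      Nat.card_congr (subgroupOfEquivOfLe hNK).toEquiv
    have hmem : (⟨x, hxK'⟩ : K) ∈ N.subgroupOf K :=
      mem_of_pow_card_eq_one (by rw [hcard]; exact Subtype.ext hx)
    exact absurd hmem hxN

lemma isMaximalCyclic_of_map_mk' (hN : (Nat.card N).Prime) (hx : x ^ Nat.card N = 1)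
    (hxN : x ∉ N) (hM : IsMaximalCyclic M) (hxM : (x : G ⧸ N) ∈ M) {K : Subgroup G} [IsCyclic K]
    (hK : K.map (QuotientGroup.mk' N) = M) : IsMaximalCyclic K := by
  refine ⟨inferInstance, fun L hL hKL => hKL.antisymm fun y hy => ?_⟩
  have hLM : M = L.map (QuotientGroup.mk' N) :=
    hM.2 _ (isCyclic_map _ L) (hK ▸ map_mono hKL)
  obtain ⟨k, hk, hky⟩ : (y : G ⧸ N) ∈ K.map (QuotientGroup.mk' N) :=
    hK ▸ hLM ▸ mem_map_of_mem _ hy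
  have hdisj := disjoint_of_mk_mem_map hN hx hxN (hLM ▸ hxM)
  have heq : k⁻¹ * y = 1 :=
    disjoint_def.1 hdisj (mul_mem (inv_mem (hKL hk)) hy) (QuotientGroup.eq.1 hky)
  rwa [← inv_mul_eq_one.1 heq]

lemma card_le_ncard_fibre (hN : (Nat.card N).Prime) (hx : x ^ Nat.card N = 1)
    (hxN : x ∉ N) (hM : IsMaximalCyclic M) (hxM : (x : G ⧸ N) ∈ M) :
    Nat.card N ≤ {K ∈ maximalCyclics G | K.map (QuotientGroup.mk' N) = M}.ncard := by
  obtain ⟨y, rfl⟩ := M.isCyclic_iff_exists_zpowers_eq_top.1 hM.1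
  obtain ⟨g, rfl⟩ := QuotientGroup.mk_surjective y
  have hmap (z : N) : (zpowers (g * z)).map (QuotientGroup.mk' N) = zpowers (g : G ⧸ N) := by
    rw [MonoidHom.map_zpowers, QuotientGroup.mk'_apply, QuotientGroup.mk_mul_of_mem g z.2]
  have hinj : Function.Injective fun z : N => zpowers (g * z) := by
    intro z w (hzw : zpowers (g * z : G) = zpowers (g * w : G))
    have hdisj := disjoint_of_mk_mem_map (K := zpowers (g * z)) hN hx hxN (hmap z ▸ hxM)
    have hmem : (g * z : G)⁻¹ * (g * w) ∈ zpowers (g * z : G) :=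
      mul_mem (inv_mem (mem_zpowers _)) (hzw ▸ mem_zpowers _)
    have heq : (g * z : G)⁻¹ * (g * w) = (z⁻¹ * w : N) := by simp [mul_assoc]
    exact inv_mul_eq_one.1 (Subtype.ext (disjoint_def.1 hdisj (heq ▸ hmem) (z⁻¹ * w).2))
  rw [← Set.ncard_range_of_injective hinj]
  refine Set.ncard_le_ncard ?_
  rintro _ ⟨z, rfl⟩
  exact ⟨isMaximalCyclic_of_map_mk' hN hx hxN hM hxM (hmap z), hmap z⟩

lemma ncard_maximalCyclics_quotient_add_le (hN : (Nat.card N).Prime) (hx : x ^ Nat.card N = 1)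
    (hxN : x ∉ N) :
    (maximalCyclics (G ⧸ N)).ncard + (Nat.card N - 1) ≤ (maximalCyclics G).ncard := by
  obtain ⟨M, hM, hxM⟩ := exists_le_isMaximalCyclic (zpowers (x : G ⧸ N))
  have hfibre := card_le_ncard_fibre hN hx hxN hM (zpowers_le.1 hxM)
  have htotal := ncard_maximalCyclics_add_ncard_fibre_le (QuotientGroup.mk'_surjective N) M
  have := hN.pos
  lia

lemma card_add_one_le_ncard_maximalCyclics (hN : (Nat.card N).Prime)
    (hx : x ^ Nat.card N = 1) (hxN : x ∉ N) : Nat.card N + 1 ≤ (maximalCyclics G).ncard := by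
  obtain ⟨M, hM, hxM⟩ := exists_le_isMaximalCyclic (zpowers (x : G ⧸ N))
  have := isCyclic_of_prime_card (p := Nat.card N) (hp := ⟨hN⟩) rfl
  obtain ⟨L, hL, hNL⟩ := exists_le_isMaximalCyclic N
  have hLM : L ∉ {K ∈ maximalCyclics G | K.map (QuotientGroup.mk' N) = M} := fun hLF => by
    have := hL.1
    have hdisj := disjoint_of_mk_mem_map hN hx hxN (hLF.2 ▸ zpowers_le.1 hxM)
    exact hN.ne_one (card_eq_one.2 (disjoint_self.1 (hdisj.mono_left hNL)))
  calc Nat.card N + 1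
      ≤ (insert L {K ∈ maximalCyclics G | K.map (QuotientGroup.mk' N) = M}).ncard := by
        rw [Set.ncard_insert_of_notMem hLM]
        exact Nat.add_le_add_right (card_le_ncard_fibre hN hx hxN hM (zpowers_le.1 hxM)) 1
    _ ≤ (maximalCyclics G).ncard :=
        Set.ncard_le_ncard (Set.insert_subset hL (Set.sep_subset _ _))

end Fibre

end MaximalCyclic

lemma mul_add_two_le_ncard_maximalCyclics {p m : ℕ} [hp : Fact p.Prime] {A : Type*} [CommGroup A]
    (hA : Nat.card A = p ^ m) (hnc : ¬ IsCyclic A) :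
    (p - 1) * (m - 1) + 2 ≤ (maximalCyclics A).ncard := by
  have : Finite A := Nat.finite_of_card_ne_zero (hA ▸ pow_ne_zero m hp.out.ne_zero)
  have hm : 2 ≤ m := by
    by_contra! hm
    refine hnc (isCyclic_of_card_dvd_prime (p := p) ?_)
    simpa only [hA, pow_one] using pow_dvd_pow p (Nat.le_of_lt_succ hm)
  induction m, hm using Nat.le_induction generalizing A with
  | base =>
    obtain ⟨N, hN⟩ :=
      Sylow.exists_subgroup_card_pow_prime p (n := 1) (hA ▸ pow_dvd_pow p one_le_two)
    rw [pow_one] at hN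
    obtain ⟨x, hx, hxN⟩ := exists_pow_eq_one_notMem_of_not_isCyclic (.of_card hA) hnc hN
    have := card_add_one_le_ncard_maximalCyclics (hN ▸ hp.out) (hN ▸ hx) hxN
    have := hp.out.pos
    lia
  | succ m hm ih =>
    obtain ⟨N, hN, hncN⟩ := exists_card_eq_prime_not_isCyclic_quotient (by lia) hA hnc
    obtain ⟨x, hx, hxN⟩ := exists_pow_eq_one_notMem_of_not_isCyclic (.of_card hA) hnc hN
    have hquot : Nat.card (A ⧸ N) = p ^ m := by
      have := card_eq_card_quotient_mul_card_subgroup N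
      rw [hA, hN, pow_succ] at this
      exact (Nat.eq_of_mul_eq_mul_right hp.out.pos this).symm
    calc (p - 1) * (m + 1 - 1) + 2 = (p - 1) * (m - 1) + 2 + (p - 1) := by
          obtain ⟨k, rfl⟩ := Nat.exists_eq_add_of_le' (one_le_two.trans hm)
          simp only [Nat.add_sub_cancel]
          ring
      _ ≤ (maximalCyclics (A ⧸ N)).ncard + (Nat.card N - 1) := by
          rw [hN]; exact Nat.add_le_add_right (ih hquot hncN inferInstance) _
      _ ≤ (maximalCyclics A).ncard :=
          ncard_maximalCyclics_quotient_add_le (hN ▸ hp.out) (hN ▸ hx) hxN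

section Eta

variable {G H : Type*} [Group G] [Group H]

lemma map_map_conj (f : G →* H) (g : G) (K : Subgroup G) :
    (K.map (MulAut.conj g).toMonoidHom).map f = (K.map f).map (MulAut.conj (f g)).toMonoidHom := by
  rw [map_map, map_map]
  congr 1
  ext x
  simp

lemma image_map_conjClass {f : G →* H} (hf : Function.Surjective f) (K : Subgroup G) :
    Subgroup.map f '' conjClass K = conjClass (K.map f) := by
  ext L
  constructor
  · rintro ⟨_, ⟨g, rfl⟩, rfl⟩
    exact ⟨f g, map_map_conj f g K⟩
  · rintro ⟨h, rfl⟩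
    obtain ⟨g, rfl⟩ := hf h
    exact ⟨_, ⟨g, rfl⟩, map_map_conj f g K⟩

lemma eta_le_of_surjective [Finite G] {f : G →* H} (hf : Function.Surjective f) :
    eta H ≤ eta G := by
  have hsub : conjClass '' maximalCyclics H ⊆
      Set.image (Subgroup.map f) '' (conjClass '' maximalCyclics G) := by
    rintro _ ⟨L, hL, rfl⟩
    obtain ⟨K, hK, rfl⟩ := hL.exists_map_eq hf
    exact ⟨_, ⟨K, hK, rfl⟩, image_map_conjClass hf K⟩
  exact (Set.ncard_le_ncard hsub).trans Set.ncard_image_le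

lemma subgroupOf_eq_of_mem_conjClass {Z C D : Subgroup G} (hZ : Z ≤ center G)
    (hD : D ∈ conjClass C) : D.subgroupOf Z = C.subgroupOf Z := by
  obtain ⟨g, rfl⟩ := hD
  ext z
  have hz : (MulAut.conj g).symm z = z := by
    rw [MulAut.conj_symm_apply, mul_assoc, ← mem_center_iff.1 (hZ z.2) g, inv_mul_cancel_left]
  rw [mem_subgroupOf, mem_subgroupOf, mem_map_equiv, hz]

lemma self_mem_conjClass (K : Subgroup G) : K ∈ conjClass K :=
  ⟨1, by simp [MulAut.one_def]⟩

lemma IsMaximalCyclic.subgroupOf_eq {Z : Subgroup G} {M : Subgroup Z} (hM : IsMaximalCyclic M)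
    {C : Subgroup G} [IsCyclic C] (hMC : M.map Z.subtype ≤ C) : C.subgroupOf Z = M := by
  refine (hM.2 _ ?_ (map_le_iff_le_comap.1 hMC)).symm
  exact isCyclic_of_injective (Z.subtype.subgroupComap C)
    fun x y h => Subtype.ext (Subtype.ext (congrArg (fun c : C => (c : G)) h))

lemma ncard_maximalCyclics_le_eta [Finite G] {Z : Subgroup G} (hZ : Z ≤ center G) :
    (maximalCyclics Z).ncard ≤ eta G := by
  have hextend (M : Subgroup Z) (hM : M ∈ maximalCyclics Z) :
      ∃ C ∈ maximalCyclics G, M.map Z.subtype ≤ C :=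
    have := hM.1
    have := isCyclic_map Z.subtype M
    exists_le_isMaximalCyclic _
  choose! C hC hMC using hextend
  have hrestrict (M : Subgroup Z) (hM : M ∈ maximalCyclics Z) : (C M).subgroupOf Z = M :=
    have := (hC M hM).1
    IsMaximalCyclic.subgroupOf_eq hM (hMC M hM)
  refine Set.ncard_le_ncard_of_injOn (fun M => conjClass (C M))
    (fun M hM => Set.mem_image_of_mem _ (hC M hM)) ?_
  intro M hM L hL (hML : conjClass (C M) = conjClass (C L))
  rw [← hrestrict M hM, ← hrestrict L hL]
  exact subgroupOf_eq_of_mem_conjClass hZ (hML ▸ self_mem_conjClass (C M))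

lemma mul_add_two_le_eta_of_le_center {p m : ℕ} [Fact p.Prime] [Finite G] {Z : Subgroup G}
    (hZ : Z ≤ center G) (hcard : Nat.card Z = p ^ m) (hnc : ¬ IsCyclic Z) :
    (p - 1) * (m - 1) + 2 ≤ eta G :=
  let : CommGroup Z :=
    { mul_comm := fun x y => Subtype.ext (mem_center_iff.1 (hZ y.2) x) }
  (mul_add_two_le_ncard_maximalCyclics hcard hnc).trans (ncard_maximalCyclics_le_eta hZ)

end Eta

section Commutator

variable {G : Type*} [Group G]

lemma commutatorElement_pow_left_of_commute {a b : G} (h : Commute a ⁅a, b⁆) (n : ℕ) :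
    ⁅a ^ n, b⁆ = ⁅a, b⁆ ^ n := by
  induction n with
  | zero => simp only [pow_zero, commutatorElement_one_left]
  | succ n ih =>
    rw [pow_succ, commutatorElement_mul_left_eq_conj_mul, (h.pow_left n).eq, mul_inv_cancel_right,
      ih, pow_succ']

lemma pow_eq_one_of_mem_commutator {H K : Subgroup G} (hHK : ⁅H, K⁆ ≤ center G) {e : ℕ}
    (hH : ∀ a ∈ H, a ^ e ∈ centralizer (K : Set G)) {x : G} (hx : x ∈ ⁅H, K⁆) : x ^ e = 1 := by
  let : CommGroup (center G) :=
    { mul_comm := fun x y => Subtype.ext (mem_center_iff.1 y.2 x) }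
  suffices hle : ⁅H, K⁆ ≤ (powMonoidHom e : center G →* center G).ker.map (center G).subtype by
    obtain ⟨z, hz, rfl⟩ := hle hx
    exact congrArg Subtype.val hz
  refine commutator_le.2 fun a ha b hb => ?_
  have hcenter : ⁅a, b⁆ ∈ center G := hHK (commutator_mem_commutator ha hb)
  refine ⟨⟨_, hcenter⟩, Subtype.ext ?_, rfl⟩
  calc ⁅a, b⁆ ^ e = ⁅a ^ e, b⁆ :=
        (commutatorElement_pow_left_of_commute (mem_center_iff.1 hcenter a) e).symm
    _ = 1 := commutatorElement_eq_one_iff_mul_comm.2 (mem_centralizer_iff.1 (hH a ha) b hb).symm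

end Commutator

section LowerCentralFactor

variable {G : Type*} [Group G]

/-- The `i`-th factor `γ_i / γ_{i+1}` of the lower central series of `G` (with `γ_0 = G`), encoded
as a subgroup of `G ⧸ γ_{i+1}` so that it can be compared with the center. -/
def lowerCentralFactor (G : Type*) [Group G] (i : ℕ) :
    Subgroup (G ⧸ (⊤ : Subgroup G).lowerCentralSeries (i + 1)) :=
  ((⊤ : Subgroup G).lowerCentralSeries i).map (QuotientGroup.mk' _)

lemma lowerCentralFactor_le_center (i : ℕ) : lowerCentralFactor G i ≤ center _ := by
  rw [← commutator_top_right_eq_bot_iff_le_center, lowerCentralFactor,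
    ← map_top_of_surjective _ (QuotientGroup.mk'_surjective _), ← map_commutator,
    ← Subgroup.lowerCentralSeries_succ, QuotientGroup.map_mk'_self]

lemma card_lowerCentralFactor (i : ℕ) :
    Nat.card (lowerCentralFactor G i) =
      ((⊤ : Subgroup G).lowerCentralSeries (i + 1)).relIndex
        ((⊤ : Subgroup G).lowerCentralSeries i) := by
  rw [lowerCentralFactor, ← relIndex_ker, QuotientGroup.ker_mk']

lemma prod_card_lowerCentralFactor (j : ℕ) :
    ∏ i ∈ Finset.range j, Nat.card (lowerCentralFactor G i) =
      ((⊤ : Subgroup G).lowerCentralSeries j).index := by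
  induction j with
  | zero => rw [Finset.prod_range_zero, Subgroup.lowerCentralSeries_zero, index_top]
  | succ j ih =>
    rw [Finset.prod_range_succ, ih, card_lowerCentralFactor, mul_comm,
      relIndex_mul_index (Subgroup.lowerCentralSeries_antitone _ j.le_succ)]

lemma prod_card_lowerCentralFactor_nilpotencyClass [Group.IsNilpotent G] :
    ∏ i ∈ Finset.range (Group.nilpotencyClass G), Nat.card (lowerCentralFactor G i) =
      Nat.card G := by
  rw [prod_card_lowerCentralFactor, Subgroup.lowerCentralSeries_nilpotencyClass, index_bot]

lemma pow_exponent_lowerCentralFactor_mem {i : ℕ} {x : G}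
    (hx : x ∈ (⊤ : Subgroup G).lowerCentralSeries i) :
    x ^ Monoid.exponent (lowerCentralFactor G i) ∈ (⊤ : Subgroup G).lowerCentralSeries (i + 1) := by
  rw [← QuotientGroup.eq_one_iff, QuotientGroup.mk_pow]
  exact Subgroup.pow_exponent_eq_one (mem_map_of_mem (QuotientGroup.mk' _) hx)

lemma exponent_lowerCentralFactor_succ_dvd (i : ℕ) :
    Monoid.exponent (lowerCentralFactor G (i + 1)) ∣ Monoid.exponent (lowerCentralFactor G i) := by
  set π := QuotientGroup.mk' ((⊤ : Subgroup G).lowerCentralSeries (i + 2))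
  have hcomm : lowerCentralFactor G (i + 1) =
      ⁅((⊤ : Subgroup G).lowerCentralSeries i).map π, ⊤⁆ := by
    rw [← map_top_of_surjective π (QuotientGroup.mk'_surjective _), ← map_commutator]
    rfl
  refine Monoid.exponent_dvd_of_forall_pow_eq_one fun x => Subtype.ext ?_
  refine pow_eq_one_of_mem_commutator (hcomm ▸ lowerCentralFactor_le_center (i + 1)) ?_
    (hcomm ▸ x.2)
  rintro _ ⟨a, ha, rfl⟩
  rw [← map_pow]
  exact center_le_centralizer _ (lowerCentralFactor_le_center (i + 1)
    (mem_map_of_mem π (pow_exponent_lowerCentralFactor_mem ha)))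

lemma card_lowerCentralFactor_dvd_of_isCyclic (i : ℕ) [IsCyclic (lowerCentralFactor G i)] :
    Nat.card (lowerCentralFactor G i) ∣ Nat.card (lowerCentralFactor G 0) := by
  have hexp : Monoid.exponent (lowerCentralFactor G i) ∣
      Monoid.exponent (lowerCentralFactor G 0) := by
    have hanti (j : ℕ) : Monoid.exponent (lowerCentralFactor G j) ∣
        Monoid.exponent (lowerCentralFactor G 0) := by
      induction j with
      | zero => rfl
      | succ j ih => exact (exponent_lowerCentralFactor_succ_dvd j).trans ih
    exact hanti i
  rw [← IsCyclic.exponent_eq_card]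
  exact hexp.trans Group.exponent_dvd_nat_card

lemma isCyclic_of_isCyclic_lowerCentralFactor_zero [Finite G] [Group.IsNilpotent G]
    [hcyc : IsCyclic (lowerCentralFactor G 0)] : IsCyclic G := by
  have htop : lowerCentralFactor G 0 = ⊤ :=
    map_top_of_surjective _ (QuotientGroup.mk'_surjective _)
  have : IsCyclic (G ⧸ (⊤ : Subgroup G).lowerCentralSeries 1) :=
    topEquiv.isCyclic.1 (htop ▸ hcyc)
  exact isCyclic_of_isCyclic_quotient_of_le_frattini
    (N := (⊤ : Subgroup G).lowerCentralSeries 1) commutator_le_frattini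

end LowerCentralFactor

section PGroup

variable {G : Type*} [Group G] [Finite G] {p : ℕ} [hp : Fact p.Prime]

lemma mul_add_two_le_eta_of_card_lowerCentralFactor (hG : IsPGroup p G) (hnc : ¬ IsCyclic G)
    {i m : ℕ} (hcard : Nat.card (lowerCentralFactor G i) = p ^ m) :
    (p - 1) * (m - 1) + 2 ≤ eta G := by
  have := hG.isNilpotent
  have hnoncyclic {j k : ℕ} (hcard : Nat.card (lowerCentralFactor G j) = p ^ k)
      (hj : ¬ IsCyclic (lowerCentralFactor G j)) : (p - 1) * (k - 1) + 2 ≤ eta G :=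
    (mul_add_two_le_eta_of_le_center (lowerCentralFactor_le_center j) hcard hj).trans
      (eta_le_of_surjective (QuotientGroup.mk'_surjective _))
  by_cases hi : IsCyclic (lowerCentralFactor G i)
  · obtain ⟨k, hk⟩ := IsPGroup.iff_card.1
      ((hG.to_quotient _).to_subgroup (lowerCentralFactor G 0))
    have hmk : m ≤ k := (Nat.pow_dvd_pow_iff_le_right hp.out.one_lt).1
      (hcard ▸ hk ▸ card_lowerCentralFactor_dvd_of_isCyclic i)
    calc (p - 1) * (m - 1) + 2 ≤ (p - 1) * (k - 1) + 2 := by gcongr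
      _ ≤ eta G := hnoncyclic hk fun _ => hnc isCyclic_of_isCyclic_lowerCentralFactor_zero
  · exact hnoncyclic hcard hi

lemma exists_card_lowerCentralFactor_eq_pow [Group.IsNilpotent G] {n : ℕ} (hG : Nat.card G = p ^ n)
    (hl : 1 ≤ Group.nilpotencyClass G) :
    ∃ i m, Nat.card (lowerCentralFactor G i) = p ^ m ∧ n ≤ Group.nilpotencyClass G * m := by
  have hPG : IsPGroup p G := .of_card hG
  choose m hm using fun i => IsPGroup.iff_card.1
    ((hPG.to_quotient _).to_subgroup (lowerCentralFactor G i))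
  have hsum : ∑ i ∈ Finset.range (Group.nilpotencyClass G), m i = n := by
    refine Nat.pow_right_injective hp.out.two_le ?_
    simp only [← hG, ← prod_card_lowerCentralFactor_nilpotencyClass (G := G), hm,
      Finset.prod_pow_eq_pow_sum]
  obtain ⟨i, -, hi⟩ := Finset.exists_le_of_sum_le (s := Finset.range (Group.nilpotencyClass G))
    (f := fun _ => n) (g := fun i => Group.nilpotencyClass G * m i)
    (Finset.nonempty_range_iff.2 (by lia))
    (by rw [← Finset.mul_sum, hsum, Finset.sum_const, Finset.card_range, smul_eq_mul])
  exact ⟨i, m i, hm i, hi⟩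

end PGroup

theorem stmt14 {G : Type*} [Group G] [Finite G] [Group.IsNilpotent G]
    {p n l : ℕ} (hp : p.Prime) (hG : Nat.card G = p ^ n)
    (hl : 1 ≤ l) (hcl : Group.nilpotencyClass G = l) (hnc : ¬ IsCyclic G) :
    (eta G : ℝ) ≥ ((p : ℝ) - 1) * ((n : ℝ) / (l : ℝ) - 2) + p + 1 := by
  have := Fact.mk hp
  subst hcl
  obtain ⟨i, m, hcard, hnm⟩ := exists_card_lowerCentralFactor_eq_pow hG hl
  have hm : (n : ℝ) / Group.nilpotencyClass G ≤ m :=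
    div_le_of_le_mul₀ (by positivity) (by positivity) (by rw [mul_comm]; exact_mod_cast hnm)
  have hp1 : (0 : ℝ) ≤ p - 1 := sub_nonneg.2 (by exact_mod_cast hp.one_le)
  have hm1 : (m : ℝ) - 1 ≤ (m - 1 : ℕ) := by
    rw [sub_le_iff_le_add]
    exact_mod_cast Nat.le_add_of_sub_le le_rfl
  calc ((p : ℝ) - 1) * (n / Group.nilpotencyClass G - 2) + p + 1
      = (p - 1) * (n / Group.nilpotencyClass G - 1) + 2 := by ring
    _ ≤ (p - 1) * (m - 1 : ℕ) + 2 := by gcongr; linarith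
    _ = ((p - 1) * (m - 1) + 2 : ℕ) := by push_cast [hp.one_le]; ring
    _ ≤ eta G := by
      exact_mod_cast mul_add_two_le_eta_of_card_lowerCentralFactor (.of_card hG) hnc hcard
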